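/- For every integer r ≥ 1, every integer i, and every integer n ≥ 1, the generalized cluster variables satisfy the identity X(i, 1) · X(i+1, n) = X(i, n+1) + X(i+2, n-1) in the field ℚ(x_1,…,x_r). (This is the multiplication formula coming from the non-split triangle with end terms the simple E_i and the indecomposable E_{i+1}[n].) -/

import Mathlib

/-- The ambient field `ℚ(x_1, …, x_r)`, realized as the fraction field of the
polynomial ring over `ℚ` in variables indexed by `ZMod r` (so indices are
automatically read modulo `r`). -/
noncomputable abbrev CyclicField (r : ℕ) : Type :=
  FractionRing (MvPolynomial (ZMod r) ℚ)

/-- The variable `x_i` for `i : ℤ`, with `x_{i+r} = x_i`. -/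
noncomputable def xv (r : ℕ) (i : ℤ) : CyclicField r :=
  algebraMap (MvPolynomial (ZMod r) ℚ) (CyclicField r) (MvPolynomial.X (i : ZMod r))

/-- The generalized cluster variable `X(l, n)` (the image of the indecomposable
nilpotent representation `E_l[n]` under the Caldero–Chapoton map):
`X(l,0) = 1` and, for `n ≥ 1`,
`X(l,n) = x_{l+n}/x_l + Σ_{k=1}^{n-1} (x_{l+n}·x_{l+r-1})/(x_{l+k-1}·x_{l+k}) + x_{l+r-1}/x_{l+n-1}`. -/
noncomputable def Xgcv (r : ℕ) (l : ℤ) : ℕ → CyclicField r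
  | 0 => 1
  | n + 1 =>
      xv r (l + n + 1) / xv r l
        + ∑ k ∈ Finset.Icc 1 n,
            (xv r (l + n + 1) * xv r (l + r - 1)) / (xv r (l + k - 1) * xv r (l + k))
        + xv r (l + r - 1) / xv r (l + n)

/-!
With `x_{l+r-1} = x_{l-1}`, the definition collapses to
`X(l, n) = x_{l-1} x_{l+n} ∑ 1 / (x_k x_{k+1})`, summed over `l - 1 ≤ k < l + n`. This is the lambda
length between the vertices `l - 1` and `l + n` of a polygon with consecutive vertices at lambda
length `1`, computed from its lambda lengths `x_k` to one further vertex. The multiplication formula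
is the Ptolemy relation for the quadrilateral `i - 1`, `i`, `i + 1`, `i + n + 1`, and the relation
itself holds because the sums are additive in the interval of summation.
-/

theorem sum_Ico_add_sum_Ico {ι M : Type*} [LinearOrder ι] [LocallyFiniteOrder ι] [AddCommMonoid M]
    (f : ι → M) {a b c : ι} (hab : a ≤ b) (hbc : b ≤ c) :
    ∑ k ∈ Finset.Ico a b, f k + ∑ k ∈ Finset.Ico b c, f k = ∑ k ∈ Finset.Ico a c, f k := by
  rw [← Finset.Ico_union_Ico_eq_Ico hab hbc,
    Finset.sum_union (Finset.Ico_disjoint_Ico_consecutive a b c)]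

theorem sum_Icc_one_eq_sum_Ico_int {M : Type*} [AddCommMonoid M] (f : ℤ → M) (l : ℤ) (n : ℕ) :
    ∑ k ∈ Finset.Icc 1 n, f (l + k - 1) = ∑ k ∈ Finset.Ico l (l + n), f k := by
  rw [Int.Ico_eq_finset_map, Finset.sum_map, ← Finset.Ico_add_one_right_eq_Icc,
    Finset.sum_Ico_eq_sum_range]
  simp [← add_assoc, add_right_comm l 1]

section LambdaLength

variable {K : Type*} [Semifield K] (x : ℤ → K)

/-- The lambda length between the vertices `a ≤ b` of an infinite polygon whose consecutive vertices
have lambda length `1`, where `x k` is the lambda length from the vertex `k` to an apex. In the fan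
triangulation from the apex, `1 / (x k * x (k + 1))` is the horocyclic length cut out at the apex by
its triangle with base from `k` to `k + 1`. For `b ≤ a` the sum is empty and the value is `0`. -/
noncomputable def lambdaLength (a b : ℤ) : K :=
  x a * x b * ∑ k ∈ Finset.Ico a b, 1 / (x k * x (k + 1))

theorem lambdaLength_mul_lambdaLength {a b c d : ℤ} (hab : a ≤ b) (hbc : b ≤ c) (hcd : c ≤ d) :
    lambdaLength x a c * lambdaLength x b d =
      lambdaLength x a d * lambdaLength x b c + lambdaLength x a b * lambdaLength x c d := by
  simp only [lambdaLength, ← sum_Ico_add_sum_Ico _ (hab.trans hbc) hcd,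
    ← sum_Ico_add_sum_Ico _ hab hbc, ← sum_Ico_add_sum_Ico _ hbc hcd]
  ring

variable {x}

theorem lambdaLength_add_one {a : ℤ} (ha : x a ≠ 0) (ha' : x (a + 1) ≠ 0) :
    lambdaLength x a (a + 1) = 1 := by
  rw [lambdaLength, Finset.Ico_add_one_right_eq_Icc, Finset.Icc_self, Finset.sum_singleton,
    mul_one_div_cancel (mul_ne_zero ha ha')]

theorem lambdaLength_eq_add_sum_add {a b : ℤ} (hab : a + 1 ≤ b) (ha : x a ≠ 0)
    (hb : x (b + 1) ≠ 0) :
    lambdaLength x a (b + 1) =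
      x (b + 1) / x (a + 1) + ∑ k ∈ Finset.Ico (a + 1) b, x (b + 1) * x a / (x k * x (k + 1)) +
        x a / x b := by
  have first : x a * x (b + 1) * (1 / (x a * x (a + 1))) = x (b + 1) / x (a + 1) := by field_simp
  have last : x a * x (b + 1) * (1 / (x b * x (b + 1))) = x a / x b := by field_simp
  rw [lambdaLength, ← sum_Ico_add_sum_Ico _ (by lia : a ≤ b) (by lia : b ≤ b + 1),
    ← sum_Ico_add_sum_Ico _ (by lia : a ≤ a + 1) hab]
  rw [Finset.Ico_add_one_right_eq_Icc, Finset.Ico_add_one_right_eq_Icc, Finset.Icc_self,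
    Finset.Icc_self, Finset.sum_singleton, Finset.sum_singleton, mul_add, mul_add, first, last,
    Finset.mul_sum]
  simp only [mul_one_div, mul_comm (x a)]

end LambdaLength

theorem xv_ne_zero (r : ℕ) (i : ℤ) : xv r i ≠ 0 :=
  (map_ne_zero_iff _ (IsFractionRing.injective _ _)).2 (MvPolynomial.X_ne_zero _)

theorem xv_add_natCast_self (r : ℕ) (i : ℤ) : xv r (i + r) = xv r i := by
  simp [xv]

theorem Xgcv_zero (r : ℕ) (l : ℤ) : Xgcv r l 0 = 1 := rfl

theorem Xgcv_eq_lambdaLength (r : ℕ) (l : ℤ) (n : ℕ) :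
    Xgcv r l n = lambdaLength (xv r) (l - 1) (l + n) := by
  cases n with
  | zero =>
    simpa [Xgcv] using (lambdaLength_add_one (xv_ne_zero r (l - 1)) (xv_ne_zero r _)).symm
  | succ n =>
    have period : xv r (l + r - 1) = xv r (l - 1) := by
      rw [add_sub_right_comm, xv_add_natCast_self]
    have middle := sum_Icc_one_eq_sum_Ico_int
      (fun k ↦ xv r (l + n + 1) * xv r (l - 1) / (xv r k * xv r (k + 1))) l n
    simp only [sub_add_cancel] at middle
    rw [Xgcv, period, middle, Nat.cast_succ, ← add_assoc,
      lambdaLength_eq_add_sum_add (by lia) (xv_ne_zero r _) (xv_ne_zero r _), sub_add_cancel]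

theorem stmt1_general (r : ℕ) (i : ℤ) (p q s : ℕ) :
    Xgcv r i (p + q + 1) * Xgcv r (i + p + 1) (q + s + 1) =
      Xgcv r i (p + q + s + 2) * Xgcv r (i + p + 1) q +
        Xgcv r i p * Xgcv r (i + p + q + 2) s := by
  have ptolemy := lambdaLength_mul_lambdaLength (xv r) (a := i - 1) (b := i + p)
    (c := i + p + q + 1) (d := i + p + q + s + 2) (by lia) (by lia) (by lia)
  simp only [Xgcv_eq_lambdaLength]
  convert ptolemy using 3 <;> push_cast <;> ring_nf

/-- `X(i, 1) · X(i+1, n) = X(i, n+1) + X(i+2, n-1)` for `r ≥ 1`, `i ∈ ℤ`, `n ≥ 1`. -/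
theorem stmt1 (r : ℕ) (hr : 1 ≤ r) (i : ℤ) (n : ℕ) (hn : 1 ≤ n) :
    Xgcv r i 1 * Xgcv r (i + 1) n = Xgcv r i (n + 1) + Xgcv r (i + 2) (n - 1) := by
  obtain ⟨m, rfl⟩ := Nat.exists_eq_add_of_le' hn
  simpa [Xgcv_zero, add_assoc] using stmt1_general r i 0 0 m
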